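/- Lemma (boundedness of least-squares and Newton-updated linear predictors). Let a ≤ b be integers with ℓ = b − a + 1 ≥ 2, let u_a,…,u_b ∈ [−1,1], let x_j = [1, j − a + 1]ᵀ ∈ ℝ², A = Σ_{j=a}^b x_j x_jᵀ, and β = A^{−1} Σ_{j=a}^b u_j x_j. Suppose each f_j : ℝ → ℝ is differentiable with |f_j'(z)| ≤ 1 for all z ∈ [−20,20], and define α = β − A^{−1} Σ_{j=a}^b f_j'(x_jᵀβ) x_j. Then: (i) |x_jᵀ β| ≤ 10 for all j ∈ [a,b] and ‖β‖₂ ≤ 8; (ii) |x_jᵀ α| ≤ 20 for all j ∈ [a,b] and ‖α‖₂ ≤ 16. -/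

import Mathlib

/-- Covariate `x_j = [1, j - a + 1]ᵀ` for an interval starting at `a`. -/
noncomputable def xv (a j : ℕ) : Fin 2 → ℝ := ![1, (j : ℝ) - (a : ℝ) + 1]

open Finset in
/-- The Gram matrix of the covariates on `[a, a + n]`, where `n + 1` is the interval length. -/
lemma sum_vecMulVec_xv (a n : ℕ) :
    ∑ j ∈ Icc a (a + n), Matrix.vecMulVec (xv a j) (xv a j) =
      !![(n + 1 : ℝ), (n + 1) * (n + 2) / 2;
        (n + 1) * (n + 2) / 2, (n + 1) * (n + 2) * (2 * n + 3) / 6] := by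
  induction n with
  | zero =>
    ext i k
    fin_cases i <;> fin_cases k <;> norm_num [xv, Matrix.vecMulVec_apply]
  | succ n ih =>
    rw [← add_assoc, sum_Icc_succ_top (by omega), ih]
    ext i k
    fin_cases i <;> fin_cases k <;> simp [xv] <;> ring

/-- The Gram matrix acts on `γ` by summing the linear predictions against the covariates. -/
lemma sum_vecMulVec_mulVec_xv (a : ℕ) (s : Finset ℕ) (γ : Fin 2 → ℝ) :
    (∑ j ∈ s, Matrix.vecMulVec (xv a j) (xv a j)).mulVec γ =
      ∑ j ∈ s, (∑ i, γ i * xv a j i) • xv a j := by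
  rw [Matrix.sum_mulVec]
  refine Finset.sum_congr rfl fun j _ => ?_
  ext k
  simp [Matrix.mulVec, dotProduct, Matrix.vecMulVec_apply, Fin.sum_univ_two]
  ring

/-- A least-squares fit has at most the energy of the data. -/
lemma sum_sq_prediction_le (a : ℕ) (s : Finset ℕ) (w : ℕ → ℝ) (γ : Fin 2 → ℝ)
    (h : (∑ j ∈ s, Matrix.vecMulVec (xv a j) (xv a j)).mulVec γ = ∑ j ∈ s, w j • xv a j) :
    ∑ j ∈ s, (∑ i, γ i * xv a j i) ^ 2 ≤ ∑ j ∈ s, w j ^ 2 := by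
  rw [sum_vecMulVec_mulVec_xv] at h
  have pair : ∀ c : ℕ → ℝ, γ ⬝ᵥ ∑ j ∈ s, c j • xv a j =
      ∑ j ∈ s, c j * ∑ i, γ i * xv a j i := fun c => by
    rw [dotProduct_sum]
    exact Finset.sum_congr rfl fun j _ => by rw [dotProduct_smul]; rfl
  have normal := congrArg (γ ⬝ᵥ ·) h
  simp only [pair] at normal
  have nonneg : 0 ≤ ∑ j ∈ s, (w j - ∑ i, γ i * xv a j i) ^ 2 :=
    Finset.sum_nonneg fun j _ => sq_nonneg _
  have expand : ∑ j ∈ s, (w j - ∑ i, γ i * xv a j i) ^ 2 =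
      ∑ j ∈ s, w j ^ 2 - 2 * ∑ j ∈ s, w j * ∑ i, γ i * xv a j i +
        ∑ j ∈ s, (∑ i, γ i * xv a j i) * ∑ i, γ i * xv a j i := by
    rw [Finset.mul_sum, ← Finset.sum_sub_distrib, ← Finset.sum_add_distrib]
    exact Finset.sum_congr rfl fun j _ => by ring
  simp only [pow_two (∑ i, γ i * xv a _ i)]
  linarith

open Finset in
lemma sum_sq_prediction (a n : ℕ) (γ : Fin 2 → ℝ) :
    ∑ j ∈ Icc a (a + n), (∑ i, γ i * xv a j i) ^ 2 =
      (n + 1) * ((γ 0 + (n + 2) / 2 * γ 1) ^ 2 + n * (n + 2) / 12 * γ 1 ^ 2) := by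
  induction n with
  | zero => simp [xv, Fin.sum_univ_two]
  | succ n ih =>
    rw [← add_assoc, sum_Icc_succ_top (by omega), ih]
    simp [xv, Fin.sum_univ_two]
    ring

/-- Least-squares fits to data in `[-1, 1]` have predictions bounded by `2`, intercept bounded
by `4` and slope bounded by `2`. -/
lemma least_squares_bounded (a n : ℕ) (hn : 1 ≤ n) (w : ℕ → ℝ)
    (hw : ∀ j ∈ Finset.Icc a (a + n), |w j| ≤ 1) (γ : Fin 2 → ℝ)
    (hγ : γ = (∑ j ∈ Finset.Icc a (a + n), Matrix.vecMulVec (xv a j) (xv a j))⁻¹.mulVec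
      (∑ j ∈ Finset.Icc a (a + n), w j • xv a j)) :
    (∀ j ∈ Finset.Icc a (a + n), |∑ i, γ i * xv a j i| ≤ 2) ∧ |γ 0| ≤ 4 ∧ |γ 1| ≤ 2 := by
  have hn' : (1 : ℝ) ≤ n := by exact_mod_cast hn
  have hdet : IsUnit (∑ j ∈ Finset.Icc a (a + n), Matrix.vecMulVec (xv a j) (xv a j)).det := by
    rw [sum_vecMulVec_xv, Matrix.det_fin_two_of, isUnit_iff_ne_zero]
    have : (0 : ℝ) < (n + 1) ^ 2 * (n + 2) * n / 12 := by positivity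
    nlinarith
  have energy := sum_sq_prediction_le a (Finset.Icc a (a + n)) w γ (by
    rw [hγ, Matrix.mulVec_mulVec, Matrix.mul_nonsing_inv _ hdet, Matrix.one_mulVec])
  have hw2 : ∑ j ∈ Finset.Icc a (a + n), w j ^ 2 ≤ n + 1 := by
    calc ∑ j ∈ Finset.Icc a (a + n), w j ^ 2 ≤ ∑ j ∈ Finset.Icc a (a + n), (1 : ℝ) :=
          Finset.sum_le_sum fun j hj => (sq_le_one_iff_abs_le_one _).2 (hw j hj)
      _ = n + 1 := by simp [add_assoc, Nat.cast_add]
  rw [sum_sq_prediction] at energy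
  have ellipse : (γ 0 + (n + 2) / 2 * γ 1) ^ 2 + n * (n + 2) / 12 * γ 1 ^ 2 ≤ 1 :=
    le_of_mul_le_mul_left (by linarith) (by positivity : (0 : ℝ) < n + 1)
  have pred : ∀ t : ℝ, 0 ≤ t → t ≤ n → |γ 0 + γ 1 * (t + 1)| ≤ 2 := fun t ht htn => by
    refine abs_le_of_sq_le_sq ?_ (by norm_num)
    set m := γ 0 + (n + 2) / 2 * γ 1 with hm
    set d := (t - n / 2) * γ 1 with hd
    have hv : γ 0 + γ 1 * (t + 1) = m + d := by rw [hm, hd]; ring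
    have hd2 : d ^ 2 ≤ n ^ 2 / 4 * γ 1 ^ 2 := by
      rw [hd, mul_pow]
      exact mul_le_mul_of_nonneg_right (by nlinarith) (sq_nonneg _)
    have : m ^ 2 + d ^ 2 / 3 ≤ 1 := by
      nlinarith [mul_nonneg (by linarith : (0 : ℝ) ≤ n) (sq_nonneg (γ 1))]
    rw [hv]
    nlinarith [sq_nonneg (m - d / 3)]
  have slope : |γ 1| ≤ 2 := by
    refine abs_le_of_sq_le_sq ?_ (by norm_num)
    have : (3 : ℝ) ≤ n * (n + 2) := by nlinarith
    nlinarith [sq_nonneg (γ 0 + (n + 2) / 2 * γ 1),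
      mul_le_mul_of_nonneg_right this (sq_nonneg (γ 1))]
  refine ⟨fun j hj => ?_, ?_, slope⟩
  · obtain ⟨haj, hjb⟩ := Finset.mem_Icc.1 hj
    have h1 : (a : ℝ) ≤ j := by exact_mod_cast haj
    have h2 : (j : ℝ) ≤ a + n := by exact_mod_cast hjb
    simpa [xv, Fin.sum_univ_two] using pred (j - a) (by linarith) (by linarith)
  · have h0 := pred 0 le_rfl (by linarith)
    rw [abs_le] at *
    constructor <;> linarith

/-!
Lemma (boundedness of least-squares and Newton-updated linear predictors).
With `ℓ = b - a + 1 ≥ 2`, `u_j ∈ [-1,1]`, `A = Σ_j x_j x_jᵀ`, `β = A⁻¹ Σ_j u_j x_j`,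
each `f_j` differentiable with `|f_j'| ≤ 1` on `[-20, 20]`, and
`α = β - A⁻¹ Σ_j f_j'(x_jᵀ β) x_j`, we have:
(i) `|x_jᵀ β| ≤ 10` for all `j` and `‖β‖₂ ≤ 8`;
(ii) `|x_jᵀ α| ≤ 20` for all `j` and `‖α‖₂ ≤ 16`.
-/
theorem newton_predictor_bounded (a b : ℕ) (hab : a ≤ b) (hlen : 2 ≤ b - a + 1)
    (u : ℕ → ℝ) (hu : ∀ j ∈ Finset.Icc a b, u j ∈ Set.Icc (-1 : ℝ) 1)
    (f : ℕ → ℝ → ℝ)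
    (hfd : ∀ j ∈ Finset.Icc a b, Differentiable ℝ (f j))
    (hf1 : ∀ j ∈ Finset.Icc a b, ∀ z ∈ Set.Icc (-20 : ℝ) 20, |deriv (f j) z| ≤ 1)
    (A : Matrix (Fin 2) (Fin 2) ℝ)
    (hA : A = ∑ j ∈ Finset.Icc a b, Matrix.vecMulVec (xv a j) (xv a j))
    (β α : Fin 2 → ℝ)
    (hβ : β = A⁻¹.mulVec (∑ j ∈ Finset.Icc a b, u j • xv a j))
    (hα : α = β - A⁻¹.mulVec
        (∑ j ∈ Finset.Icc a b, deriv (f j) (∑ i, β i * xv a j i) • xv a j)) :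
    (∀ j ∈ Finset.Icc a b, |∑ i, β i * xv a j i| ≤ 10) ∧
      Real.sqrt (β 0 ^ 2 + β 1 ^ 2) ≤ 8 ∧
      (∀ j ∈ Finset.Icc a b, |∑ i, α i * xv a j i| ≤ 20) ∧
      Real.sqrt (α 0 ^ 2 + α 1 ^ 2) ≤ 16 := by
  obtain ⟨n, rfl⟩ := Nat.exists_eq_add_of_le hab
  have hn : 1 ≤ n := by omega
  subst hA
  obtain ⟨hβp, hβ0, hβ1⟩ :=
    least_squares_bounded a n hn u (fun j hj => abs_le.2 (hu j hj)) β hβ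
  obtain ⟨hγp, hγ0, hγ1⟩ := least_squares_bounded a n hn
    (fun j => deriv (f j) (∑ i, β i * xv a j i))
    (fun j hj => hf1 j hj _ <| abs_le.1 <| (hβp j hj).trans (by norm_num)) _ rfl
  rw [eq_sub_iff_add_eq, ← eq_sub_iff_add_eq'] at hα
  rw [hα] at hγp hγ0 hγ1
  refine ⟨fun j hj => (hβp j hj).trans (by norm_num), ?_, fun j hj => ?_, ?_⟩
  · rw [Real.sqrt_le_left (by norm_num)]
    nlinarith [sq_le_sq.2 (hβ0.trans (le_abs_self 4)), sq_le_sq.2 (hβ1.trans (le_abs_self 2))]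
  · have h1 := hβp j hj
    have h2 := hγp j hj
    simp only [Pi.sub_apply, sub_mul, Finset.sum_sub_distrib] at h2
    rw [abs_le] at *
    constructor <;> linarith
  · have h0 : |α 0| ≤ 8 := by
      rw [Pi.sub_apply] at hγ0
      rw [abs_le] at *
      constructor <;> linarith
    have h1 : |α 1| ≤ 4 := by
      rw [Pi.sub_apply] at hγ1
      rw [abs_le] at *
      constructor <;> linarith
    rw [Real.sqrt_le_left (by norm_num)]
    nlinarith [sq_le_sq.2 (h0.trans (le_abs_self 8)), sq_le_sq.2 (h1.trans (le_abs_self 4))]
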